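/- Let F be a finite family of pairwise disjoint translates of a convex body in ℝ², let C ∈ F, and let V(C) = {p ∈ ℝ² : there exists q ∈ ∂C such that the closed segment [p,q] does not intersect the interior of any member of F}. Then the interior of C is a bounded connected component of ℝ² \ V(C), and every bounded connected component of ℝ² \ V(C) equals the interior of C. -/

import Mathlib

/-!
Why the complement of `V(C)` has no other bounded component. Let `x` be an invisible point
outside `C`. For `c ∈ C` consider the ray from `x` pointing away from `c`. If for some `c` this ray
stays invisible, it leads from `x` to infinity inside the complement of `V(C)`. Otherwise, every
such ray contains a point `y` seeing some `d ∈ ∂C`. The point `d` is not on the line `xc`, since then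
`x` would see it too; so it lies strictly to the left or strictly to the right of that line.
Restricting to a bounded part of the rays, the set of `c` for which "left" occurs and the set for
which "right" occurs are both closed; they cover `C`, and both are nonempty, as the two tangents from
`x` to `C` show. As `C` is connected, both occur for some `c` (`exists_escape`).

So two points `y`, `y'` of one ray see points `d`, `d'` of `C` on different sides of the line `xc`. Let
`e` be the point where the chord `[d, d']` of `C` meets this line. An obstacle `D = C + v` blocks the
view from `x` to `e`. It crosses neither of the sight lines `[y, d]`, `[y', d']`, nor
`[d, d'] ⊆ C`, so it is enclosed between them (`half_trapped`). Every chord parallel to `[d, d']` in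
the enclosed region is shorter than `[d, d']`, whereas `D` contains `[d + v, d' + v]`
(`no_trapped_translate`). This is where the obstacles being translates matters.
-/

open Set Metric ENNReal

noncomputable section

abbrev E2 := EuclideanSpace ℝ (Fin 2)

/-- A convex body in the plane: a compact convex set with nonempty interior. -/
def IsConvexBody (C : Set E2) : Prop :=
  Convex ℝ C ∧ IsCompact C ∧ (interior C).Nonempty

/-- The (unlimited vision) visibility region of `C` with respect to the obstacle
family `F`: all points that see some boundary point of `C`. -/
def Vis (F : Set (Set E2)) (C : Set E2) : Set E2 :=
  {p | ∃ q ∈ frontier C, ∀ D ∈ F, Disjoint (segment ℝ p q) (interior D)}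


/-! ### Planar preliminaries -/

/-- The planar cross product (determinant) `u × v`; its sign tells on which side of the directed
line `ℝ u` the vector `v` lies. -/
def cross (u v : E2) : ℝ := u 0 * v 1 - u 1 * v 0

/-- `p` sees the boundary point `q` of `C` past the obstacles of `F`. -/
def Sees (F : Set (Set E2)) (C : Set E2) (p q : E2) : Prop :=
  q ∈ frontier C ∧ ∀ D ∈ F, Disjoint (segment ℝ p q) (interior D)

lemma mem_Vis_iff {F : Set (Set E2)} {C : Set E2} {p : E2} :
    p ∈ Vis F C ↔ ∃ q, Sees F C p q := Iff.rfl

lemma continuous_cross {X : Type*} [TopologicalSpace X] {f g : X → E2}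
    (hf : Continuous f) (hg : Continuous g) : Continuous fun x => cross (f x) (g x) := by
  unfold cross
  fun_prop

/-- Cramer's rule. -/
lemma exists_coords {u k : E2} (h : cross u k ≠ 0) (v : E2) :
    ∃ a b : ℝ, v = a • u + b • k := by
  refine ⟨cross v k / cross u k, cross u v / cross u k, ?_⟩
  ext i
  fin_cases i
  all_goals
    simp only [PiLp.add_apply, PiLp.smul_apply, smul_eq_mul]
    field_simp
    simp [cross]
    ring

lemma exists_smul_of_cross_eq_zero {u v : E2} (hu : u ≠ 0) (h : cross u v = 0) :
    ∃ r : ℝ, v = r • u := by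
  have h' : u 0 * v 1 = u 1 * v 0 := by simpa [cross, sub_eq_zero] using h
  by_cases h0 : u 0 = 0
  · have h1 : u 1 ≠ 0 := by
      intro h1
      apply hu
      ext i
      fin_cases i <;> simp [h0, h1]
    refine ⟨v 1 / u 1, ?_⟩
    have hv : v 0 = 0 := by
      rw [h0, zero_mul] at h'
      exact (mul_eq_zero.mp h'.symm).resolve_left h1
    ext i
    fin_cases i
    · simp [h0, hv]
    · simp [h1]
  · refine ⟨v 0 / u 0, ?_⟩
    ext i
    fin_cases i
    · simp [h0]
    · simp only [PiLp.smul_apply, smul_eq_mul]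
      field_simp
      simpa [mul_comm] using h'

/-- A point outside a compact convex set has two extreme (tangent) directions towards it. -/
lemma exists_tangent {C : Set E2} (hc : Convex ℝ C) (hk : IsCompact C) (hne : C.Nonempty)
    {x : E2} (hx : x ∉ C) :
    (∃ c ∈ C, ∀ d ∈ C, 0 ≤ cross (c - x) (d - x)) ∧
    (∃ c ∈ C, ∀ d ∈ C, cross (c - x) (d - x) ≤ 0) := by
  obtain ⟨f, m, hfx, hf⟩ := geometric_hahn_banach_point_closed hc hk.isClosed hx
  have hpos : ∀ c ∈ C, 0 < f (c - x) := fun c h => by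
    rw [map_sub]; linarith [hf c h]
  set p := f (EuclideanSpace.single 0 1) with hp
  set q := f (EuclideanSpace.single 1 1) with hq
  have hfv : ∀ v : E2, f v = v 0 * p + v 1 * q := by
    intro v
    have hv : v = v 0 • EuclideanSpace.single 0 (1 : ℝ) + v 1 • EuclideanSpace.single 1 (1 : ℝ) := by
      ext i
      fin_cases i <;> simp
    conv_lhs => rw [hv]
    simp [hp, hq]
  -- `g` is `f` composed with a rotation; the slope `g / f` orders the directions towards `C`.
  let g : E2 → ℝ := fun v => v 1 * p - v 0 * q
  have hcont : ContinuousOn (fun d => g (d - x) / f (d - x)) C := by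
    apply ContinuousOn.div
    · apply Continuous.continuousOn
      simp only [g]
      fun_prop
    · fun_prop
    · exact fun c h => (hpos c h).ne'
  have hid : ∀ u v : E2, f u * g v - g u * f v = (p ^ 2 + q ^ 2) * cross u v := by
    intro u v
    simp only [hfv, g, cross]
    ring
  have hpq : 0 < p ^ 2 + q ^ 2 := by
    obtain ⟨c, h⟩ := hne
    have h1 := hpos c h
    rw [hfv] at h1
    by_contra hcon
    have hp0 : p = 0 := by nlinarith
    have hq0 : q = 0 := by nlinarith
    simp [hp0, hq0] at h1
  constructor
  · obtain ⟨c, hcC, hmin⟩ := hk.exists_isMinOn hne hcont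
    refine ⟨c, hcC, fun d hd => ?_⟩
    have h1 : g (c - x) / f (c - x) ≤ g (d - x) / f (d - x) := hmin hd
    rw [div_le_div_iff₀ (hpos c hcC) (hpos d hd)] at h1
    have h2 := hid (c - x) (d - x)
    by_contra hcon
    nlinarith
  · obtain ⟨c, hcC, hmax⟩ := hk.exists_isMaxOn hne hcont
    refine ⟨c, hcC, fun d hd => ?_⟩
    have h1 : g (d - x) / f (d - x) ≤ g (c - x) / f (c - x) := hmax hd
    rw [div_le_div_iff₀ (hpos d hd) (hpos c hcC)] at h1
    have h2 := hid (c - x) (d - x)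
    by_contra hcon
    nlinarith

lemma exists_first_hit {C : Set E2} (hk : IsClosed C) {x e : E2} (hx : x ∉ C) (he : e ∈ C) :
    ∃ e' ∈ frontier C, segment ℝ x e' ⊆ segment ℝ x e ∧
      Disjoint (segment ℝ x e') (interior C) := by
  let φ : ℝ → E2 := fun t => x + t • (e - x)
  have hφ : Continuous φ := by fun_prop
  have hK : IsCompact (Icc (0 : ℝ) 1 ∩ φ ⁻¹' C) := isCompact_Icc.inter_right (hk.preimage hφ)
  obtain ⟨t, ⟨ht, htC⟩, hmin⟩ := hK.exists_isLeast ⟨1, by simp, by simpa [φ] using he⟩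
  have hlt : ∀ s, 0 ≤ s → s < t → φ s ∉ C := fun s h0 hs hsC =>
    absurd (hmin ⟨⟨h0, by linarith [ht.2]⟩, hsC⟩) (not_le.mpr hs)
  have ht0 : 0 < t := by
    rcases ht.1.lt_or_eq with h | h
    · exact h
    · rw [← h] at htC
      exact absurd htC (by simpa [φ] using hx)
  have hnot : φ t ∉ interior C := by
    intro hi
    have hn : φ ⁻¹' interior C ∈ nhds t := (isOpen_interior.preimage hφ).mem_nhds hi
    obtain ⟨ε, hε, hball⟩ := Metric.mem_nhds_iff.mp hn
    have hs : max 0 (t - ε / 2) ∈ Metric.ball t ε := by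
      rw [Metric.mem_ball, Real.dist_eq, abs_lt]
      constructor
      · linarith [le_max_right 0 (t - ε / 2)]
      · linarith [max_lt ht0 (by linarith : t - ε / 2 < t)]
    exact hlt _ (le_max_left _ _) (max_lt ht0 (by linarith)) (interior_subset (hball hs))
  refine ⟨φ t, ?_, ?_, ?_⟩
  · rw [frontier, hk.closure_eq]
    exact ⟨htC, hnot⟩
  · apply (convex_segment x e).segment_subset (left_mem_segment ℝ x e)
    rw [segment_eq_image']
    exact ⟨t, ht, rfl⟩
  · rw [Set.disjoint_left, segment_eq_image']
    rintro _ ⟨s, hs, rfl⟩ hi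
    have heq : x + s • (φ t - x) = φ (s * t) := by
      simp only [φ]
      module
    simp only [heq] at hi
    rcases hs.2.lt_or_eq with h | h
    · exact hlt (s * t) (mul_nonneg hs.1 ht.1) (by nlinarith) (interior_subset hi)
    · rw [h, one_mul] at hi
      exact hnot hi

/-! ### Obstacles trapped between two sight lines -/

/-- In the affine coordinates `(a, b) ↦ e + a • u + b • g`: a convex set whose interior contains
the point `(τ, 0)`, and which can cross neither the sight line from `(α, 0)` to `(0, 1)` nor the
segment from `(0, 0)` to `(0, 1)`, has its part with `b ≥ 0` inside the triangle bounded by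
these segments and the axis `b = 0`. -/
lemma half_trapped {D : Set E2} (hD : Convex ℝ D) {e u g : E2} {τ α a b : ℝ}
    (hτ : 0 < τ) (hτα : τ ≤ α) (hz : e + τ • u ∈ interior D)
    (hy : Disjoint (segment ℝ (e + α • u) (e + g)) (interior D))
    (hC : Disjoint (segment ℝ e (e + g)) D)
    (hP : e + a • u + b • g ∈ D) (hb : 0 ≤ b) :
    0 < a ∧ a + α * b ≤ α := by
  have hα : 0 < α := lt_of_lt_of_le hτ hτα
  have base : ∀ t : ℝ, 0 ≤ t → t ≤ 1 → (1 - t) * τ + t * a = 0 → t * b ≤ 1 → False := by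
    intro t h0 h1 ha hb1
    have hmem : (1 - t) • (e + τ • u) + t • (e + a • u + b • g) ∈ D :=
      hD (interior_subset hz) hP (by linarith) h0 (by ring)
    refine Set.disjoint_left.mp hC ?_ hmem
    refine ⟨1 - t * b, t * b, by linarith, by positivity, by ring, ?_⟩
    have : (1 - t) • (e + τ • u) + t • (e + a • u + b • g)
        = e + ((1 - t) * τ + t * a) • u + (t * b) • g := by module
    rw [this, ha]
    module
  have sight : ∀ t : ℝ, 0 ≤ t → t < 1 → 0 ≤ (1 - t) * τ + t * a →
      (1 - t) * τ + t * a + α * (t * b) = α → False := by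
    intro t h0 h1 ha hb1
    have hmem : (1 - t) • (e + τ • u) + t • (e + a • u + b • g) ∈ interior D :=
      hD.combo_interior_self_mem_interior hz hP (by linarith) h0 (by ring)
    refine Set.disjoint_left.mp hy ?_ hmem
    refine ⟨1 - t * b, t * b, ?_, by positivity, by ring, ?_⟩
    · by_contra hcon
      nlinarith
    · have h2 : (1 - t) * τ + t * a = α * (1 - t * b) := by linarith
      have : (1 - t) • (e + τ • u) + t • (e + a • u + b • g)
          = e + ((1 - t) * τ + t * a) • u + (t * b) • g := by module
      rw [this, h2]
      module
  -- Both steps follow the segment from `(τ, 0)` to `(a, b)`: it meets the line of the sight line at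
  -- time `t`, and the axis `a = 0` at time `s`; the earlier meeting point is a forbidden one.
  have hle : a + α * b ≤ α := by
    by_contra hcon
    push Not at hcon
    have hden : 0 < a + α * b - τ := by linarith
    obtain ⟨t, ht⟩ : ∃ t, t = (α - τ) / (a + α * b - τ) := ⟨_, rfl⟩
    have ht' : t * (a + α * b - τ) = α - τ := by rw [ht]; field_simp
    have h0 : 0 ≤ t := by rw [ht]; exact div_nonneg (by linarith) hden.le
    have h1 : t < 1 := by rw [ht, div_lt_one hden]; linarith
    by_cases ha : 0 ≤ (1 - t) * τ + t * a
    · exact sight t h0 h1 ha (by linarith)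
    · push Not at ha
      have ha0 : a < 0 := by
        by_contra h
        push Not at h
        nlinarith [mul_nonneg h0 h, mul_nonneg (sub_nonneg.mpr h1.le) hτ.le]
      have hd : 0 < τ - a := by linarith
      obtain ⟨s, hs⟩ : ∃ s, s = τ / (τ - a) := ⟨_, rfl⟩
      have hs' : s * (τ - a) = τ := by rw [hs]; field_simp
      have hs0 : 0 ≤ s := by rw [hs]; positivity
      have hst : s < t := by
        by_contra h
        push Not at h
        nlinarith
      refine base s hs0 (by linarith) (by linarith) ?_
      have h3 : s * (a + α * b - τ) ≤ α - τ := by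
        rw [← ht']
        exact mul_le_mul_of_nonneg_right hst.le hden.le
      have h4 : α * (s * b) ≤ α * 1 := by nlinarith
      exact le_of_mul_le_mul_left h4 hα
  refine ⟨?_, hle⟩
  by_contra ha
  push Not at ha
  have hd : 0 < τ - a := by linarith
  obtain ⟨s, hs⟩ : ∃ s, s = τ / (τ - a) := ⟨_, rfl⟩
  have hs' : s * (τ - a) = τ := by rw [hs]; field_simp
  have hs0 : 0 ≤ s := by rw [hs]; positivity
  have hs1 : s ≤ 1 := by rw [hs, div_le_one hd]; linarith
  refine base s hs0 hs1 (by linarith) ?_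
  have h4 : α * (s * b) ≤ α * 1 := by
    nlinarith [mul_le_mul_of_nonneg_left hle hs0,
      mul_le_mul_of_nonneg_left hτα (sub_nonneg.mpr hs1)]
  exact le_of_mul_le_mul_left h4 hα

/-- Two points `e + α • u` and `e + β • u` of a line cannot see two points `d`, `d'` of `C` on
different sides of that line when `e ∈ [d, d']` and a disjoint translate `D = C + v` has an
interior point on the line between `e` and both of them: by `half_trapped` the translated chord
`[d + v, d' + v]` of `D` would have to fit between the two sight lines, where all chords parallel
to `[d, d']` are too short. -/
lemma no_trapped_translate {C D : Set E2} (hCc : Convex ℝ C) (hD : Convex ℝ D)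
    (hCD : Disjoint C D) {v : E2} (hv : ∀ c ∈ C, c + v ∈ D)
    {d d' e u : E2} {θ τ α β : ℝ} (hd : d ∈ C) (hd' : d' ∈ C)
    (hθ0 : 0 < θ) (hθ1 : θ < 1) (he : e = (1 - θ) • d + θ • d')
    (hcr : cross u (d' - d) ≠ 0)
    (hτ : 0 < τ) (hτα : τ ≤ α) (hτβ : τ ≤ β) (hz : e + τ • u ∈ interior D)
    (hy : Disjoint (segment ℝ (e + α • u) d) (interior D))
    (hy' : Disjoint (segment ℝ (e + β • u) d') (interior D)) : False := by
  obtain ⟨h, m, hvm⟩ := exists_coords hcr v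
  have heC : e ∈ C := by
    rw [he]; exact hCc hd hd' (by linarith) hθ0.le (by ring)
  have hα : 0 < α := lt_of_lt_of_le hτ hτα
  have hβ : 0 < β := lt_of_lt_of_le hτ hτβ
  have key : ∀ a b : ℝ, e + a • u + b • (d - e) ∈ D → 0 ≤ b → 0 < a ∧ a + α * b ≤ α := by
    intro a b hP hb
    refine half_trapped hD hτ hτα hz ?_ ?_ hP hb
    · rwa [add_sub_cancel]
    · rw [add_sub_cancel]
      exact hCD.mono_left (hCc.segment_subset heC hd)
  have key' : ∀ a b : ℝ, e + a • u + b • (d' - e) ∈ D → 0 ≤ b → 0 < a ∧ a + β * b ≤ β := by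
    intro a b hP hb
    refine half_trapped hD hτ hτβ hz ?_ ?_ hP hb
    · rwa [add_sub_cancel]
    · rw [add_sub_cancel]
      exact hCD.mono_left (hCc.segment_subset heC hd')
  have hθ1' : 0 < 1 - θ := by linarith
  have e1 : d - e = (-θ) • (d' - d) := by rw [he]; module
  have e2 : d' - e = (1 - θ) • (d' - d) := by rw [he]; module
  -- In the coordinates of `(u, d' - d)` at `e`, the ends of the chord `[d + v, d' + v]` of `D`
  -- are `(h, m - θ)` and `(h, m + 1 - θ)`.
  have p1 : e + h • u + (m - θ) • (d' - d) ∈ D := by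
    have := hv d hd
    have heq : e + h • u + (m - θ) • (d' - d) = d + v := by rw [hvm, he]; module
    rwa [heq]
  have p2 : e + h • u + (m + 1 - θ) • (d' - d) ∈ D := by
    have := hv d' hd'
    have heq : e + h • u + (m + 1 - θ) • (d' - d) = d' + v := by rw [hvm, he]; module
    rwa [heq]
  have left : m ≤ θ → 0 < m := by
    intro hm
    have hP : e + h • u + ((θ - m) / θ) • (d - e) ∈ D := by
      rw [e1, smul_smul]
      have : (θ - m) / θ * -θ = m - θ := by field_simp; ring
      rwa [this]
    obtain ⟨h1, h2⟩ := key _ _ hP (div_nonneg (by linarith) hθ0.le)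
    have h3 : (θ - m) / θ < 1 := by
      by_contra hcon
      nlinarith
    rw [div_lt_one hθ0] at h3
    linarith
  have right : 0 ≤ m + 1 - θ → m < 0 := by
    intro hm
    have hP : e + h • u + ((m + 1 - θ) / (1 - θ)) • (d' - e) ∈ D := by
      rw [e2, smul_smul]
      have : (m + 1 - θ) / (1 - θ) * (1 - θ) = m + 1 - θ := by field_simp
      rwa [this]
    obtain ⟨h1, h2⟩ := key' _ _ hP (div_nonneg hm hθ1'.le)
    have h3 : (m + 1 - θ) / (1 - θ) < 1 := by
      by_contra hcon
      nlinarith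
    rw [div_lt_one hθ1'] at h3
    linarith
  by_cases hm : m ≤ θ
  · have h1 := left hm
    have h2 := right (by linarith)
    linarith
  · have h2 := right (by linarith)
    linarith

/-! ### Escaping to infinity inside the invisible set -/

lemma isClosed_sees (F : Set (Set E2)) (C : Set E2) :
    IsClosed {z : E2 × E2 | Sees F C z.1 z.2} := by
  have h : {z : E2 × E2 | Sees F C z.1 z.2} = {z | z.2 ∈ frontier C} ∩
      ⋂ D ∈ F, ⋂ t ∈ Icc (0 : ℝ) 1, {z | z.1 + t • (z.2 - z.1) ∈ (interior D)ᶜ} := by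
    ext z
    simp only [Sees, Set.disjoint_left, segment_eq_image', mem_ofPred_eq, mem_inter_iff,
      mem_iInter, forall_mem_image, mem_compl_iff]
  rw [h]
  refine (isClosed_frontier.preimage continuous_snd).inter ?_
  refine isClosed_biInter fun D _ => isClosed_biInter fun t _ => ?_
  exact isOpen_interior.isClosed_compl.preimage (by fun_prop)

/-- An invisible point `x` outside `C` can run away from some point `c` of `C` along a straight
line, over any prescribed range, and stay invisible. -/
lemma exists_escape {C₀ : Set E2} (hC₀ : IsConvexBody C₀) {F : Set (Set E2)}
    (htr : ∀ D ∈ F, ∃ w : E2, D = (fun x => x + w) '' C₀) (hdisj : F.Pairwise Disjoint)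
    {C : Set E2} (hC : C ∈ F) (hCb : IsConvexBody C) {x : E2} (hxV : x ∉ Vis F C) (hx : x ∉ C)
    (S : ℝ) :
    ∃ c ∈ C, ∀ s ∈ Icc 0 S, x + s • (x - c) ∉ Vis F C := by
  by_contra hcon
  push Not at hcon
  obtain ⟨hc, hk, hint⟩ := hCb
  have hne : C.Nonempty := hint.mono interior_subset
  have hfr : ∀ q ∈ frontier C, q ∈ C := fun q hq => hk.isClosed.frontier_subset hq
  -- `T 1` consists of the `c` whose opposite ray has a point seeing `C` weakly to the left of the
  -- line `x c`; `T (-1)` is the same with right in place of left.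
  let T : ℝ → Set E2 := fun σ => {c | c ∈ C ∧ ∃ s ∈ Icc 0 S, ∃ d, Sees F C (x + s • (x - c)) d ∧
    0 ≤ σ * cross (c - x) (d - x)}
  have hT : ∀ σ, IsClosed (T σ) := by
    intro σ
    let A : Set (E2 × ℝ × E2) := (C ×ˢ (Icc 0 S ×ˢ C)) ∩
      ({z | Sees F C (x + z.2.1 • (x - z.1)) z.2.2} ∩
        {z | 0 ≤ σ * cross (z.1 - x) (z.2.2 - x)})
    have hA : IsCompact A := by
      refine (hk.prod (isCompact_Icc.prod hk)).inter_right (IsClosed.inter ?_ ?_)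
      · exact (isClosed_sees F C).preimage
          (f := fun z : E2 × ℝ × E2 => (x + z.2.1 • (x - z.1), z.2.2)) (by fun_prop)
      · exact isClosed_le continuous_const
          (continuous_const.mul (continuous_cross (by fun_prop) (by fun_prop)))
    have : T σ = Prod.fst '' A := by
      ext c
      constructor
      · rintro ⟨h1, s, hs, d, hd, h2⟩
        exact ⟨(c, s, d), ⟨⟨h1, hs, hfr d hd.1⟩, hd, h2⟩, rfl⟩
      · rintro ⟨⟨c, s, d⟩, ⟨⟨h1, hs, -⟩, hd, h2⟩, rfl⟩
        exact ⟨h1, s, hs, d, hd, h2⟩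
    rw [this]
    exact (hA.image continuous_fst).isClosed
  have hcov : C ⊆ T 1 ∪ T (-1) := by
    intro c h
    obtain ⟨s, hs, d, hd⟩ := hcon c h
    rcases le_total 0 (cross (c - x) (d - x)) with h0 | h0
    · exact Or.inl ⟨h, s, hs, d, hd, by linarith⟩
    · exact Or.inr ⟨h, s, hs, d, hd, by linarith⟩
  obtain ⟨⟨cl, hcl, hl⟩, ⟨cr, hcr, hr⟩⟩ := exists_tangent hc hk hne hx
  have hn1 : (C ∩ T 1).Nonempty := by
    obtain ⟨s, hs, d, hd⟩ := hcon cl hcl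
    exact ⟨cl, hcl, hcl, s, hs, d, hd, by linarith [hl d (hfr d hd.1)]⟩
  have hn2 : (C ∩ T (-1)).Nonempty := by
    obtain ⟨s, hs, d, hd⟩ := hcon cr hcr
    exact ⟨cr, hcr, hcr, s, hs, d, hd, by linarith [hr d (hfr d hd.1)]⟩
  obtain ⟨c, hcC, ⟨-, s, hs, d, hd, hpos⟩, ⟨-, s', hs', d', hd', hneg⟩⟩ :=
    isPreconnected_closed_iff.mp hc.isPreconnected _ _ (hT 1) (hT (-1)) hcov hn1 hn2
  have hcx : c - x ≠ 0 := fun h => hx (by rwa [← sub_eq_zero.mp h])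
  -- Points of `C` on the line through `x` and `c` lie strictly on the side of `c`.
  have hline : ∀ p ∈ C, cross (c - x) (p - x) = 0 → ∃ r : ℝ, 0 < r ∧ p = x + r • (c - x) := by
    intro p hp h0
    obtain ⟨r, hr⟩ := exists_smul_of_cross_eq_zero hcx h0
    refine ⟨r, ?_, by rw [← hr]; abel⟩
    by_contra hle
    push Not at hle
    have h1 : 0 < 1 - r := by linarith
    apply hx
    have hmem := hc hp hcC (a := 1 / (1 - r)) (b := -r / (1 - r)) (by positivity)
      (div_nonneg (by linarith) h1.le) (by field_simp; ring)
    have hp' : p = x + r • (c - x) := by rw [← hr]; abel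
    have heq : (1 / (1 - r)) • p + (-r / (1 - r)) • c = x := by
      rw [hp', smul_add, smul_smul]
      have e1 : 1 / (1 - r) * r = r / (1 - r) := by ring
      have e2 : -r / (1 - r) = -(r / (1 - r)) := by ring
      have e3 : 1 / (1 - r) = 1 + r / (1 - r) := by field_simp; ring
      rw [e1, e2, e3]
      module
    rwa [heq] at hmem
  -- A sight line along the line `x c` would pass through `x`.
  have hstrict : ∀ s ∈ Icc 0 S, ∀ d, Sees F C (x + s • (x - c)) d →
      cross (c - x) (d - x) ≠ 0 := by
    intro s hs d hd h0
    obtain ⟨r, hr, hdr⟩ := hline d (hfr d hd.1) h0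
    apply hxV
    refine ⟨d, hd.1, fun D hD => (hd.2 D hD).mono_left ?_⟩
    apply (convex_segment _ _).segment_subset _ (right_mem_segment ℝ _ _)
    have hsr : 0 < s + r := by linarith [hs.1]
    refine ⟨r / (s + r), s / (s + r), by positivity, div_nonneg hs.1 hsr.le,
      by field_simp; ring, ?_⟩
    have e1 : r / (s + r) = 1 - s / (s + r) := by field_simp; ring
    have e2 : s / (s + r) * r = s - s / (s + r) * s := by field_simp; ring
    rw [hdr, smul_add (s / (s + r)), smul_smul, e2, e1]
    module
  have hp0' : cross (c - x) (d' - x) < 0 :=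
    lt_of_le_of_ne (by linarith) (hstrict s' hs' d' hd')
  have hp0 : 0 < cross (c - x) (d - x) :=
    lt_of_le_of_ne (by linarith) (hstrict s hs d hd).symm
  -- `e` is the point where the chord `[d, d']` meets the line through `x` and `c`.
  obtain ⟨θ, hθ⟩ : ∃ θ, θ = cross (c - x) (d - x) /
    (cross (c - x) (d - x) - cross (c - x) (d' - x)) := ⟨_, rfl⟩
  have hden : 0 < cross (c - x) (d - x) - cross (c - x) (d' - x) := by linarith
  have hθ0 : 0 < θ := by rw [hθ]; exact div_pos hp0 hden
  have hθ1 : θ < 1 := by rw [hθ, div_lt_one hden]; linarith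
  have hθeq : θ * (cross (c - x) (d - x) - cross (c - x) (d' - x)) = cross (c - x) (d - x) := by
    rw [hθ]; field_simp
  obtain ⟨e, he⟩ : ∃ e, e = (1 - θ) • d + θ • d' := ⟨_, rfl⟩
  have heC : e ∈ C := by
    rw [he]; exact hc (hfr d hd.1) (hfr d' hd'.1) (by linarith) hθ0.le (by ring)
  have hce : cross (c - x) (e - x) = 0 := by
    have : cross (c - x) (e - x) = (1 - θ) * cross (c - x) (d - x)
        + θ * cross (c - x) (d' - x) := by
      simp only [he, cross, PiLp.sub_apply, PiLp.add_apply, PiLp.smul_apply, smul_eq_mul]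
      ring
    rw [this]
    linarith
  obtain ⟨r, hr, her⟩ := hline e heC hce
  obtain ⟨e', he'f, he'sub, he'd⟩ := exists_first_hit hk.isClosed hx heC
  -- As `x` does not see `e'`, some obstacle other than `C` meets `[x, e]`.
  obtain ⟨D, hDF, hDn⟩ : ∃ D ∈ F, ¬ Disjoint (segment ℝ x e') (interior D) := by
    by_contra h
    push Not at h
    exact hxV ⟨e', he'f, h⟩
  have hDC : C ≠ D := fun h => hDn (h ▸ he'd)
  obtain ⟨z, hzs, hzD⟩ := Set.not_disjoint_iff.mp hDn
  have hCD := hdisj hC hDF hDC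
  obtain ⟨w, hw⟩ := htr C hC
  obtain ⟨w', hw'⟩ := htr D hDF
  have hDconv : Convex ℝ D := by
    rw [hw']
    simpa [add_comm] using hC₀.1.translate w'
  have htrans : ∀ p ∈ C, p + (w' - w) ∈ D := by
    intro p hp
    rw [hw] at hp
    obtain ⟨p0, hp0, rfl⟩ := hp
    rw [hw']
    exact ⟨p0, hp0, by simp only; abel⟩
  have hze := he'sub hzs
  obtain ⟨a, b, ha, hb, hab, hzeq⟩ := hze
  have hz : e + a • (x - e) ∈ interior D := by
    have : e + a • (x - e) = z := by
      rw [← hzeq, ← (by linarith : (1 : ℝ) - a = b)]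
      module
    rwa [this]
  have ha0 : 0 < a := by
    rcases ha.lt_or_eq with h | h
    · exact h
    · rw [← h, zero_smul, add_zero] at hz
      exact absurd (interior_subset hz) (Set.disjoint_left.mp hCD heC)
  have hyeq : ∀ s : ℝ, e + (1 + s / r) • (x - e) = x + s • (x - c) := by
    intro s
    have e1 : x - e = r • (x - c) := by rw [her]; module
    rw [add_smul, one_smul, e1, smul_smul]
    have e2 : s / r * r = s := by field_simp
    rw [e2, her]
    module
  have hcr' : cross (x - e) (d' - d) ≠ 0 := by
    have : cross (x - e) (d' - d) =
        r * (cross (c - x) (d - x) - cross (c - x) (d' - x)) := by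
      simp only [her, cross, PiLp.sub_apply, PiLp.add_apply, PiLp.smul_apply, smul_eq_mul]
      ring
    rw [this]
    positivity
  have hle : ∀ s ∈ Icc 0 S, a ≤ 1 + s / r := fun s hs => by
    have : 0 ≤ s / r := div_nonneg hs.1 hr.le
    linarith
  refine no_trapped_translate hc hDconv hCD htrans (hfr d hd.1) (hfr d' hd'.1) hθ0 hθ1 he hcr'
    ha0 (hle s hs) (hle s' hs') hz ?_ ?_
  · rw [hyeq]; exact hd.2 D hDF
  · rw [hyeq]; exact hd'.2 D hDF

/-- For a finite family `F` of pairwise disjoint translates of a convex body and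
`C ∈ F`, the visibility region `V(C)` has exactly one hole, namely `C` itself:
the interior of `C` is a bounded connected component of the complement of `V(C)`,
and every bounded connected component of the complement equals the interior of `C`. -/
theorem one_hole_for_translates
    (C₀ : Set E2) (hC₀ : IsConvexBody C₀)
    (F : Set (Set E2)) (hfin : F.Finite)
    (htr : ∀ D ∈ F, ∃ w : E2, D = (fun x => x + w) '' C₀)
    (hdisj : F.Pairwise Disjoint)
    (C : Set E2) (hC : C ∈ F) :
    interior C ⊆ (Vis F C)ᶜ ∧
    Bornology.IsBounded (interior C) ∧
    (∀ x ∈ interior C, connectedComponentIn (Vis F C)ᶜ x = interior C) ∧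
    (∀ x ∈ (Vis F C)ᶜ, Bornology.IsBounded (connectedComponentIn (Vis F C)ᶜ x) →
      connectedComponentIn (Vis F C)ᶜ x = interior C) := by
  obtain ⟨w, hw⟩ := htr C hC
  have hCb : IsConvexBody C := by
    have himg : C = Homeomorph.addRight w '' C₀ := hw
    refine ⟨?_, ?_, ?_⟩
    · rw [hw]
      simpa [add_comm] using hC₀.1.translate w
    · rw [himg]
      exact hC₀.2.1.image (Homeomorph.addRight w).continuous
    · rw [himg, ← Homeomorph.image_interior]
      exact hC₀.2.2.image _
  have hcl : IsClosed C := hCb.2.1.isClosed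
  have hint : interior C ⊆ (Vis F C)ᶜ := by
    rintro p hp ⟨q, -, h⟩
    exact Set.disjoint_left.mp (h C hC) (left_mem_segment ℝ p q) hp
  have hfrontier : frontier C ⊆ Vis F C := by
    intro q hq
    refine ⟨q, hq, fun D hD => ?_⟩
    rw [segment_same, Set.disjoint_singleton_left]
    by_cases h : C = D
    · rw [← h]; exact hq.2
    · exact fun hi => Set.disjoint_left.mp (hdisj hC hD h) (hcl.frontier_subset hq)
        (interior_subset hi)
  have hcomp : ∀ x ∈ interior C, connectedComponentIn (Vis F C)ᶜ x = interior C := by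
    intro x hx
    apply Subset.antisymm
    · -- The component avoids `frontier C`, so it is covered by the open sets `interior C`, `Cᶜ`.
      refine isPreconnected_connectedComponentIn.subset_left_of_subset_union isOpen_interior
        hcl.isOpen_compl (disjoint_compl_right.mono_left interior_subset) ?_
        ⟨x, mem_connectedComponentIn (hint hx), hx⟩
      intro y hy
      by_cases hyC : y ∈ C
      · left
        by_contra hi
        exact connectedComponentIn_subset _ _ hy
          (hfrontier ⟨subset_closure hyC, hi⟩)
      · exact Or.inr hyC
    · exact hCb.1.interior.isPreconnected.subset_connectedComponentIn hx hint
  refine ⟨hint, hCb.2.1.isBounded.subset interior_subset, hcomp, ?_⟩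
  · intro x hx hbdd
    by_cases hxi : x ∈ interior C
    · exact hcomp x hxi
    · exfalso
      have hxC : x ∉ C := fun h => hx (hfrontier ⟨subset_closure h, hxi⟩)
      obtain ⟨R, hR⟩ := hbdd.subset_closedBall x
      have hR0 : 0 ≤ R := by
        have := hR (mem_connectedComponentIn hx)
        rw [mem_closedBall, dist_self] at this
        exact this
      have hne : C.Nonempty := hCb.2.2.mono interior_subset
      have hδ : 0 < infDist x C := (hcl.notMem_iff_infDist_pos hne).mp hxC
      have hS0 : 0 ≤ (R + 1) / infDist x C := by positivity
      obtain ⟨c, hcC, hesc⟩ := exists_escape hC₀ htr hdisj hC hCb hx hxC ((R + 1) / infDist x C)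
      have hsub : (fun s : ℝ => x + s • (x - c)) '' Icc 0 ((R + 1) / infDist x C) ⊆
          connectedComponentIn (Vis F C)ᶜ x := by
        apply IsPreconnected.subset_connectedComponentIn
        · exact isPreconnected_Icc.image _ (by fun_prop)
        · exact ⟨0, ⟨le_refl _, hS0⟩, by simp⟩
        · rintro _ ⟨s, hs, rfl⟩
          exact hesc s hs
      have hfar := hR (hsub ⟨_, ⟨hS0, le_refl _⟩, rfl⟩)
      rw [mem_closedBall, dist_self_add_left, norm_smul, Real.norm_of_nonneg hS0] at hfar
      have hdist : infDist x C ≤ ‖x - c‖ := by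
        rw [← dist_eq_norm]; exact infDist_le_dist_of_mem hcC
      have : (R + 1) / infDist x C * infDist x C = R + 1 := by field_simp
      nlinarith [mul_le_mul_of_nonneg_left hdist hS0]

end
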